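/- Let m ∈ ℕ with m ≥ 2. If V̂ ∈ 𝒱_m maximizes the (real-valued, since Y is Hermitian) objective Re⟨Y, Vᴴ V⟩ over all V ∈ 𝒱_m, then ℓ_m(V̂, z*) ≤ 8σ‖W‖/n. -/

import Mathlib

open scoped Classical
open Matrix

noncomputable section

namespace PhaseSync

/-- Euclidean norm of a complex vector. -/
def enorm {k : ℕ} (v : Fin k → ℂ) : ℝ := Real.sqrt (∑ i, ‖v i‖ ^ 2)

/-- Frobenius norm of a complex matrix. -/
def fnorm {k l : ℕ} (A : Matrix (Fin k) (Fin l) ℂ) : ℝ :=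
  Real.sqrt (∑ i, ∑ j, ‖A i j‖ ^ 2)

/-- L2 operator norm of a square complex matrix. -/
def opNorm {k : ℕ} (A : Matrix (Fin k) (Fin k) ℂ) : ℝ :=
  ‖Matrix.toEuclideanCLM (𝕜 := ℂ) (n := Fin k) A‖

/-- Indicator function of a proposition. -/
def ind (P : Prop) : ℝ := if P then 1 else 0

/-- The loss ℓ_m(V, z) = min_{a : ‖a‖=1} ‖V - a zᴴ‖_F² / n. -/
def lossM {k l : ℕ} (V : Matrix (Fin k) (Fin l) ℂ) (z : Fin l → ℂ) : ℝ :=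
  sInf { r : ℝ | ∃ a : Fin k → ℂ, enorm a = 1 ∧
    r = fnorm (V - Matrix.vecMulVec a (star z)) ^ 2 / l }

/-- The loss ℓ_1(z', z) = min_{|a|=1} ‖z' - a z‖² / n. -/
def loss1 {l : ℕ} (z' z : Fin l → ℂ) : ℝ :=
  sInf { r : ℝ | ∃ a : ℂ, ‖a‖ = 1 ∧ r = enorm (z' - a • z) ^ 2 / l }

/-- The mapping F₁: entrywise normalization of Y z. -/
def F1 {l : ℕ} (Y : Matrix (Fin l) (Fin l) ℂ) (z : Fin l → ℂ) : Fin l → ℂ :=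
  fun j => if Y.mulVec z j ≠ 0 then Y.mulVec z j / (‖Y.mulVec z j‖ : ℂ) else z j

/-- jth column of a matrix. -/
def col {k l : ℕ} (A : Matrix (Fin k) (Fin l) ℂ) (j : Fin l) : Fin k → ℂ := fun i => A i j

/-- The mapping F_m: columnwise normalization of V Yᴴ. -/
def Fm {k l : ℕ} (Y : Matrix (Fin l) (Fin l) ℂ) (V : Matrix (Fin k) (Fin l) ℂ) :
    Matrix (Fin k) (Fin l) ℂ :=
  Matrix.of fun i j =>
    if col (V * Yᴴ) j ≠ 0 then (V * Yᴴ) i j / ((enorm (col (V * Yᴴ) j) : ℝ) : ℂ) else V i j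

/-- g_t(x) = x / max(|x|, t). -/
def gfun (t : ℝ) (x : ℂ) : ℂ := x / ((max ‖x‖ t : ℝ) : ℂ)

/-- The mapping G(z, s, t), coordinatewise g_t(z*_j s + σ [W z]_j). -/
def G {l : ℕ} (zstar : Fin l → ℂ) (σ : ℝ) (W : Matrix (Fin l) (Fin l) ℂ)
    (z : Fin l → ℂ) (s : ℂ) (t : ℝ) : Fin l → ℂ :=
  fun j => gfun t (zstar j * s + (σ : ℂ) * W.mulVec z j)

/-- The mapping F₁'(z, s), entrywise normalization of z* s + σ W z. -/
def F1' {l : ℕ} (zstar : Fin l → ℂ) (σ : ℝ) (W : Matrix (Fin l) (Fin l) ℂ)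
    (z : Fin l → ℂ) (s : ℂ) : Fin l → ℂ :=
  fun j =>
    if zstar j * s + (σ : ℂ) * W.mulVec z j ≠ 0 then
      (zstar j * s + (σ : ℂ) * W.mulVec z j) /
        ((‖zstar j * s + (σ : ℂ) * W.mulVec z j‖ : ℝ) : ℂ)
    else z j

/-- W with jth row and column zeroed out. -/
def Wminus {l : ℕ} (W : Matrix (Fin l) (Fin l) ℂ) (j : Fin l) : Matrix (Fin l) (Fin l) ℂ :=
  Matrix.of fun k i => if k = j ∨ i = j then 0 else W k i

/-!
Write `Y = z zᴴ + E`. For `V` with unit columns the objective `Re⟨Y, VᴴV⟩` is within `n‖E‖` of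
`‖V z‖²`. Comparing a maximizer `V` with a rank-one competitor `a zᴴ`, for which `‖a zᴴ z‖ = n`,
gives `n² - ‖V z‖² ≤ 2 n ‖E‖`, hence `n - ‖V z‖ ≤ 2‖E‖`. On the other hand
`‖V - a zᴴ‖_F² = 2 n - 2 Re⟨a, V z⟩`, so the direction `a` of `V z` gives loss at most
`2 (n - ‖V z‖) / n`.
-/

section

variable {k l : ℕ}

lemma enorm_eq_norm_toLp (v : Fin k → ℂ) : enorm v = ‖WithLp.toLp 2 v‖ :=
  (EuclideanSpace.norm_eq _).symm

lemma enorm_nonneg (v : Fin k → ℂ) : 0 ≤ enorm v :=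
  Real.sqrt_nonneg _

lemma enorm_sq (v : Fin k → ℂ) : enorm v ^ 2 = ∑ i, ‖v i‖ ^ 2 :=
  Real.sq_sqrt (by positivity)

lemma enorm_star (v : Fin k → ℂ) : enorm (star v) = enorm v := by
  simp [enorm]

lemma enorm_smul (c : ℂ) (v : Fin k → ℂ) : enorm (c • v) = ‖c‖ * enorm v := by
  simp only [enorm_eq_norm_toLp, WithLp.toLp_smul, norm_smul]

lemma star_dotProduct_eq_inner (x y : Fin k → ℂ) :
    star x ⬝ᵥ y = inner ℂ (WithLp.toLp 2 x) (WithLp.toLp 2 y) := by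
  rw [EuclideanSpace.inner_toLp_toLp, dotProduct_comm]

lemma star_dotProduct_self (x : Fin k → ℂ) : star x ⬝ᵥ x = (enorm x : ℂ) ^ 2 := by
  rw [star_dotProduct_eq_inner, inner_self_eq_norm_sq_to_K, enorm_eq_norm_toLp]
  rfl

lemma norm_star_dotProduct_le (x y : Fin k → ℂ) : ‖star x ⬝ᵥ y‖ ≤ enorm x * enorm y := by
  rw [star_dotProduct_eq_inner, enorm_eq_norm_toLp, enorm_eq_norm_toLp]
  exact norm_inner_le_norm _ _

lemma enorm_sq_of_unimodular {z : Fin k → ℂ} (hz : ∀ j, ‖z j‖ = 1) : enorm z ^ 2 = k := by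
  simp [enorm_sq, hz]

lemma exists_enorm_eq_one_star_dotProduct_eq (hk : 0 < k) (u : Fin k → ℂ) :
    ∃ a : Fin k → ℂ, enorm a = 1 ∧ star a ⬝ᵥ u = enorm u := by
  by_cases hu : enorm u = 0
  · refine ⟨Pi.single ⟨0, hk⟩ 1, by simp [enorm_eq_norm_toLp], ?_⟩
    have hu_zero : u = 0 := by simpa [enorm_eq_norm_toLp] using hu
    simp [hu_zero, enorm]
  · have hu' : (enorm u : ℂ) ≠ 0 := Complex.ofReal_ne_zero.mpr hu
    refine ⟨(enorm u : ℂ)⁻¹ • u, ?_, ?_⟩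
    · rw [enorm_smul, norm_inv, Complex.norm_of_nonneg (enorm_nonneg u), inv_mul_cancel₀ hu]
    · rw [star_smul, smul_dotProduct, star_dotProduct_self]
      simp [sq, hu']

lemma fnorm_sq (A : Matrix (Fin k) (Fin l) ℂ) : fnorm A ^ 2 = ∑ i, ∑ j, ‖A i j‖ ^ 2 :=
  Real.sq_sqrt (by positivity)

lemma fnorm_sq_of_unit_cols {V : Matrix (Fin k) (Fin l) ℂ} (hV : ∀ j, enorm (col V j) = 1) :
    fnorm V ^ 2 = l := by
  calc fnorm V ^ 2 = ∑ j, enorm (col V j) ^ 2 := by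
        simp only [fnorm_sq, enorm_sq, col]
        exact Finset.sum_comm
    _ = l := by simp [hV]

lemma opNorm_nonneg (A : Matrix (Fin k) (Fin k) ℂ) : 0 ≤ opNorm A :=
  norm_nonneg _

lemma opNorm_smul (c : ℂ) (A : Matrix (Fin k) (Fin k) ℂ) : opNorm (c • A) = ‖c‖ * opNorm A := by
  simp only [opNorm, map_smul, norm_smul]

lemma enorm_mulVec_le (A : Matrix (Fin k) (Fin k) ℂ) (x : Fin k → ℂ) :
    enorm (A *ᵥ x) ≤ opNorm A * enorm x := by
  rw [enorm_eq_norm_toLp, enorm_eq_norm_toLp, ← Matrix.toEuclideanCLM_toLp]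
  exact ContinuousLinearMap.le_opNorm _ _

lemma trace_conjTranspose_mul_gram (A : Matrix (Fin l) (Fin l) ℂ) (V : Matrix (Fin k) (Fin l) ℂ) :
    trace (Aᴴ * (Vᴴ * V)) = ∑ i, star (A *ᵥ star (V.row i)) ⬝ᵥ star (V.row i) := by
  rw [← Matrix.mul_assoc, trace_mul_comm]
  refine Finset.sum_congr rfl fun i _ => ?_
  rw [star_mulVec, star_star, dotProduct_comm, dotProduct_comm, ← dotProduct_mulVec]
  rfl

lemma norm_trace_conjTranspose_mul_gram_le (A : Matrix (Fin l) (Fin l) ℂ)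
    (V : Matrix (Fin k) (Fin l) ℂ) : ‖trace (Aᴴ * (Vᴴ * V))‖ ≤ opNorm A * fnorm V ^ 2 := by
  have row_le (i : Fin k) :
      ‖star (A *ᵥ star (V.row i)) ⬝ᵥ star (V.row i)‖ ≤ opNorm A * enorm (V.row i) ^ 2 := by
    calc ‖star (A *ᵥ star (V.row i)) ⬝ᵥ star (V.row i)‖
        ≤ enorm (A *ᵥ star (V.row i)) * enorm (star (V.row i)) := norm_star_dotProduct_le _ _
      _ ≤ opNorm A * enorm (star (V.row i)) * enorm (star (V.row i)) :=
          mul_le_mul_of_nonneg_right (enorm_mulVec_le A _) (enorm_nonneg _)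
      _ = opNorm A * enorm (V.row i) ^ 2 := by rw [enorm_star]; ring
  calc ‖trace (Aᴴ * (Vᴴ * V))‖ ≤ ∑ i, opNorm A * enorm (V.row i) ^ 2 := by
        rw [trace_conjTranspose_mul_gram]
        exact norm_sum_le_of_le _ fun i _ => row_le i
    _ = opNorm A * fnorm V ^ 2 := by simp only [← Finset.mul_sum, fnorm_sq, enorm_sq, row_apply]

lemma trace_conjTranspose_vecMulVec_mul_gram (z : Fin l → ℂ) (V : Matrix (Fin k) (Fin l) ℂ) :
    trace ((vecMulVec z (star z))ᴴ * (Vᴴ * V)) = (enorm (V *ᵥ z) : ℂ) ^ 2 := by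
  rw [conjTranspose_vecMulVec, star_star, trace_mul_comm, mul_vecMulVec, trace_vecMulVec,
    dotProduct_comm, ← mulVec_mulVec, dotProduct_mulVec, ← star_mulVec, star_dotProduct_self]

lemma abs_re_trace_spiked_mul_gram_sub_le (z : Fin l → ℂ) (E : Matrix (Fin l) (Fin l) ℂ)
    (V : Matrix (Fin k) (Fin l) ℂ) :
    |(trace ((vecMulVec z (star z) + E)ᴴ * (Vᴴ * V))).re - enorm (V *ᵥ z) ^ 2|
      ≤ opNorm E * fnorm V ^ 2 := by
  have noise_part : (trace ((vecMulVec z (star z) + E)ᴴ * (Vᴴ * V))).re - enorm (V *ᵥ z) ^ 2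
      = (trace (Eᴴ * (Vᴴ * V))).re := by
    rw [conjTranspose_add, Matrix.add_mul, trace_add, trace_conjTranspose_vecMulVec_mul_gram,
      Complex.add_re, ← Complex.ofReal_pow, Complex.ofReal_re, add_sub_cancel_left]
  rw [noise_part]
  exact (Complex.abs_re_le_norm _).trans (norm_trace_conjTranspose_mul_gram_le E V)

lemma enorm_col_vecMulVec (a : Fin k → ℂ) (z : Fin l → ℂ) (j : Fin l) :
    enorm (col (vecMulVec a (star z)) j) = ‖z j‖ * enorm a := by
  have col_eq : col (vecMulVec a (star z)) j = star (z j) • a := by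
    ext i
    simp [col, vecMulVec_apply, mul_comm]
  rw [col_eq, enorm_smul, norm_star]

lemma enorm_vecMulVec_mulVec_self (a : Fin k → ℂ) (z : Fin l → ℂ) :
    enorm (vecMulVec a (star z) *ᵥ z) = enorm z ^ 2 * enorm a := by
  rw [vecMulVec_mulVec, star_dotProduct_self, op_smul_eq_smul, enorm_smul]
  simp

lemma fnorm_sub_vecMulVec_sq (V : Matrix (Fin k) (Fin l) ℂ) (a : Fin k → ℂ) (z : Fin l → ℂ) :
    fnorm (V - vecMulVec a (star z)) ^ 2
      = fnorm V ^ 2 + enorm a ^ 2 * enorm z ^ 2 - 2 * (star a ⬝ᵥ (V *ᵥ z)).re := by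
  have entry (i : Fin k) (j : Fin l) : ‖(V - vecMulVec a (star z)) i j‖ ^ 2
      = ‖V i j‖ ^ 2 + ‖a i‖ ^ 2 * ‖z j‖ ^ 2 - 2 * (star (a i) * (V i j * z j)).re := by
    simp only [Matrix.sub_apply, vecMulVec_apply, Pi.star_apply, Complex.sq_norm,
      Complex.normSq_sub, Complex.star_def, Complex.normSq_conj, map_mul, Complex.conj_conj]
    ring_nf
  have cross : (star a ⬝ᵥ (V *ᵥ z)).re = ∑ i, ∑ j, (star (a i) * (V i j * z j)).re := by
    simp only [dotProduct, mulVec, Finset.mul_sum, Complex.re_sum, Pi.star_apply]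
  simp only [fnorm_sq, enorm_sq, entry, cross, Finset.sum_sub_distrib, Finset.sum_add_distrib,
    Finset.sum_mul_sum, ← Finset.mul_sum]

lemma lossM_le (V : Matrix (Fin k) (Fin l) ℂ) (z : Fin l → ℂ) {a : Fin k → ℂ}
    (ha : enorm a = 1) : lossM V z ≤ fnorm (V - vecMulVec a (star z)) ^ 2 / l := by
  refine csInf_le ⟨0, ?_⟩ ⟨a, ha, rfl⟩
  rintro r ⟨b, -, rfl⟩
  positivity

lemma lossM_le_of_unit_cols (hk : 0 < k) {z : Fin l → ℂ} (hz : ∀ j, ‖z j‖ = 1)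
    {V : Matrix (Fin k) (Fin l) ℂ} (hV : ∀ j, enorm (col V j) = 1) :
    lossM V z ≤ 2 * (l - enorm (V *ᵥ z)) / l := by
  obtain ⟨a, ha, ha_dir⟩ := exists_enorm_eq_one_star_dotProduct_eq hk (V *ᵥ z)
  refine (lossM_le V z ha).trans_eq ?_
  rw [fnorm_sub_vecMulVec_sq, ha_dir, Complex.ofReal_re, fnorm_sq_of_unit_cols hV,
    enorm_sq_of_unimodular hz, ha]
  ring

end

lemma sub_le_of_sq_sub_sq_le {r s c : ℝ} (hr : 0 < r) (hs : 0 ≤ s) (hc : 0 ≤ c)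
    (h : r ^ 2 - s ^ 2 ≤ c * r) : r - s ≤ c := by
  by_contra! hlt
  have : c * r < (r - s) * (r + s) :=
    mul_lt_mul hlt (le_add_of_nonneg_right hs) hr (hc.trans hlt.le)
  linarith

lemma sq_sub_enorm_mulVec_sq_le_of_isMax {m n : ℕ} (hn : 1 ≤ n) {z : Fin n → ℂ}
    (hz : ∀ j, ‖z j‖ = 1) {E : Matrix (Fin n) (Fin n) ℂ}
    {Vhat : Matrix (Fin m) (Fin n) ℂ} (hVhat : ∀ j, enorm (col Vhat j) = 1)
    (hmax : ∀ V : Matrix (Fin m) (Fin n) ℂ, (∀ j, enorm (col V j) = 1) →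
      (trace ((vecMulVec z (star z) + E)ᴴ * (Vᴴ * V))).re
        ≤ (trace ((vecMulVec z (star z) + E)ᴴ * (Vhatᴴ * Vhat))).re) :
    (n : ℝ) ^ 2 - enorm (Vhat *ᵥ z) ^ 2 ≤ 2 * opNorm E * n := by
  -- Any unit vector would serve as `a`.
  set a := col Vhat ⟨0, hn⟩
  have ha : enorm a = 1 := hVhat _
  set V₀ := vecMulVec a (star z)
  have hV₀ (j : Fin n) : enorm (col V₀ j) = 1 := by
    rw [enorm_col_vecMulVec, hz, ha, one_mul]
  have hV₀z : enorm (V₀ *ᵥ z) = n := by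
    rw [enorm_vecMulVec_mulVec_self, enorm_sq_of_unimodular hz, ha, mul_one]
  have objective_V₀ := abs_le.mp (abs_re_trace_spiked_mul_gram_sub_le z E V₀)
  have objective_Vhat := abs_le.mp (abs_re_trace_spiked_mul_gram_sub_le z E Vhat)
  rw [fnorm_sq_of_unit_cols hV₀, hV₀z] at objective_V₀
  rw [fnorm_sq_of_unit_cols hVhat] at objective_Vhat
  linarith [hmax V₀ hV₀, objective_V₀.1, objective_Vhat.2]

theorem stmt10_general {n m : ℕ} (hn : 1 ≤ n)
    (zstar : Fin n → ℂ) (hzstar : ∀ j, ‖zstar j‖ = 1)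
    (σ : ℝ) (hσ : 0 ≤ σ) (W : Matrix (Fin n) (Fin n) ℂ)
    (Y : Matrix (Fin n) (Fin n) ℂ)
    (hY : Y = Matrix.vecMulVec zstar (star zstar) + (σ : ℂ) • W)
    (Vhat : Matrix (Fin m) (Fin n) ℂ) (hVhat : ∀ j, enorm (col Vhat j) = 1)
    (hmax : ∀ V : Matrix (Fin m) (Fin n) ℂ, (∀ j, enorm (col V j) = 1) →
      (Matrix.trace (Yᴴ * (Vᴴ * V))).re ≤ (Matrix.trace (Yᴴ * (Vhatᴴ * Vhat))).re) :
    lossM Vhat zstar ≤ 4 * σ * opNorm W / n := by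
  subst hY
  have hm : 0 < m := by
    rcases m.eq_zero_or_pos with rfl | hm
    · simpa [enorm] using hVhat ⟨0, hn⟩
    · exact hm
  have gap : n - enorm (Vhat *ᵥ zstar) ≤ 2 * (σ * opNorm W) := by
    have sq_gap := sq_sub_enorm_mulVec_sq_le_of_isMax hn hzstar hVhat hmax
    rw [opNorm_smul, Complex.norm_of_nonneg hσ] at sq_gap
    have hW_nonneg := opNorm_nonneg W
    exact sub_le_of_sq_sub_sq_le (by exact_mod_cast hn) (enorm_nonneg _) (by positivity) sq_gap
  calc lossM Vhat zstar ≤ 2 * (n - enorm (Vhat *ᵥ zstar)) / n :=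
        lossM_le_of_unit_cols hm hzstar hVhat
    _ ≤ 2 * (2 * (σ * opNorm W)) / n := by gcongr
    _ = 4 * σ * opNorm W / n := by ring

theorem stmt10 {n m : ℕ} (hn : 1 ≤ n) (hm : 2 ≤ m)
    (zstar : Fin n → ℂ) (hzstar : ∀ j, ‖zstar j‖ = 1)
    (σ : ℝ) (hσ : 0 < σ) (W : Matrix (Fin n) (Fin n) ℂ) (hW : W.IsHermitian)
    (Y : Matrix (Fin n) (Fin n) ℂ)
    (hY : Y = Matrix.vecMulVec zstar (star zstar) + (σ : ℂ) • W)
    (Vhat : Matrix (Fin m) (Fin n) ℂ) (hVhat : ∀ j, enorm (col Vhat j) = 1)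
    (hmax : ∀ V : Matrix (Fin m) (Fin n) ℂ, (∀ j, enorm (col V j) = 1) →
      (Matrix.trace (Yᴴ * (Vᴴ * V))).re ≤ (Matrix.trace (Yᴴ * (Vhatᴴ * Vhat))).re) :
    lossM Vhat zstar ≤ 8 * σ * opNorm W / n := by
  refine (stmt10_general hn zstar hzstar σ hσ.le W Y hY Vhat hVhat hmax).trans ?_
  gcongr <;> [exact opNorm_nonneg W; norm_num]

end PhaseSync
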